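/- Let T = (V, root, par) be a leafless, narrow rooted directed tree. Then the bounded Cesàro operator C_T on ℓ²(V) is subnormal if and only if T has no branching vertex, i.e. card(Chi(v)) = 1 for every v ∈ V (equivalently, T is isomorphic to the chain tree T₁ on ℕ in which each n has the unique child n+1). -/

import Mathlib

noncomputable section

open scoped ENNReal

/-- A rooted directed tree encoded by a vertex set `V`, a root, and a parent map. -/
structure TreeData (V : Type) where
  root : V
  par : V → V
  par_root : par root = root
  hroot : ∀ v : V, ∃ n : ℕ, par^[n] v = root

namespace TreeData

variable {V : Type}

open scoped Classical in
/-- The depth of a vertex: the least `n` with `par^[n] v = root`. -/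
def dep (T : TreeData V) (v : V) : ℕ := Nat.find (T.hroot v)

/-- The Cesàro map `Λ_T`. -/
def cesaro (T : TreeData V) (f : V → ℂ) : V → ℂ := fun v =>
  ((T.dep v : ℂ) + 1)⁻¹ * ∑ j ∈ Finset.range (T.dep v + 1), f (T.par^[j] v)

/-- The `n`-th level `Chi^⟨n⟩(root)`: vertices of depth `n`. -/
def level (T : TreeData V) (n : ℕ) : Set V := {v : V | T.dep v = n}

/-- The set of children of a vertex. -/
def chi (T : TreeData V) (u : V) : Set V := {v : V | v ≠ T.root ∧ T.par v = u}

end TreeData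

/-- The Hilbert space `ℓ²(V)` of square-summable complex functions on `V`. -/
abbrev L2 (V : Type) : Type := lp (fun _ : V => ℂ) 2

/-- A witness to subnormality of a bounded operator `S` on a complex Hilbert space `H`:
a Hilbert space `K`, an isometric embedding `J : H → K`, and a bounded normal operator `N` on
`K` extending `S`. -/
structure SubnormalWitness {H : Type} [NormedAddCommGroup H] [InnerProductSpace ℂ H]
    [CompleteSpace H] (S : H →L[ℂ] H) where
  K : Type
  [grp : NormedAddCommGroup K]
  [ips : InnerProductSpace ℂ K]
  [cpl : CompleteSpace K]
  J : H →ₗᵢ[ℂ] K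
  N : K →L[ℂ] K
  normal : ContinuousLinearMap.adjoint N * N = N * ContinuousLinearMap.adjoint N
  intertwine : ∀ h : H, N (J h) = J (S h)

/-- A bounded operator on a complex Hilbert space is subnormal if it has a normal extension to
a larger Hilbert space. -/
def IsSubnormal {H : Type} [NormedAddCommGroup H] [InnerProductSpace ℂ H] [CompleteSpace H]
    (S : H →L[ℂ] H) : Prop :=
  Nonempty (SubnormalWitness S)

section OperatorPart

open ContinuousLinearMap

/-- A map between direct sums acting componentwise. -/
lemma exists_lp_map {E F : Type} [NormedAddCommGroup E] [InnerProductSpace ℂ E]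
    [NormedAddCommGroup F] [InnerProductSpace ℂ F]
    (A : ℕ → E →L[ℂ] F) (B : ℝ) (hA : ∀ k x, ‖A k x‖ ≤ B * ‖x‖) :
    ∃ D : lp (fun _ : ℕ => E) 2 →L[ℂ] lp (fun _ : ℕ => F) 2, ∀ x k, D x k = A k (x k) := by
  have hmem : ∀ x : lp (fun _ : ℕ => E) 2, Memℓp (fun k => A k (x k)) 2 := by
    intro x
    have h1 : Memℓp (fun k => (B : ℝ) * ‖x k‖) 2 := by
      have := (lp.memℓp x).norm
      exact this.const_mul B
    refine h1.mono (E := fun _ => F) ?_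
    intro k
    exact hA k _
  have hB : ∀ x : lp (fun _ : ℕ => E) 2, ‖(⟨_, hmem x⟩ : lp (fun _ : ℕ => F) 2)‖ ≤ |B| * ‖x‖ := by
    intro x
    refine lp.norm_le_of_tsum_le (by norm_num) (by positivity) ?_
    have h2 : Summable fun i => ‖x i‖ ^ (2 : ℝ≥0∞).toReal := (lp.memℓp x).summable (by norm_num)
    rw [Real.mul_rpow (abs_nonneg _) (norm_nonneg _), lp.norm_rpow_eq_tsum (by norm_num) x, ← tsum_mul_left]
    refine Summable.tsum_le_tsum ?_ ((hmem x).summable (by norm_num)) (h2.mul_left _)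
    intro i
    rw [← Real.mul_rpow (abs_nonneg _) (norm_nonneg _)]
    refine Real.rpow_le_rpow (norm_nonneg _) ((hA i _).trans ?_) (by norm_num)
    gcongr
    exact le_abs_self B
  refine ⟨LinearMap.mkContinuous
    { toFun := fun x => ⟨_, hmem x⟩
      map_add' := fun x y => by ext k; simp; rfl
      map_smul' := fun c x => by ext k; simp } |B| hB, fun x k => rfl⟩

/-- A partial isometry `U` with `U J = J V`, from `‖J V x‖ = ‖J x‖`. -/
lemma exists_partial_isometry {H E : Type} [NormedAddCommGroup H] [InnerProductSpace ℂ H]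
    [NormedAddCommGroup E] [InnerProductSpace ℂ E] [CompleteSpace E]
    (J J' : H →L[ℂ] E) (h : ∀ x, ‖J' x‖ = ‖J x‖) :
    ∃ U : E →L[ℂ] E, (∀ x, U (J x) = J' x) ∧ (∀ x, adjoint U (U (J x)) = J x) ∧
      (∀ y, U (adjoint U (U y)) = U y) := by
  let M : Submodule ℂ E := J.range.topologicalClosure
  have : CompleteSpace M := (Submodule.isClosed_topologicalClosure _).completeSpace_coe
  let e : H →ₗ[ℂ] M := LinearMap.codRestrict M J.toLinearMap
    (fun x => Submodule.le_topologicalClosure _ ⟨x, rfl⟩)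
  have he : ∀ x, (e x : E) = J x := fun x => rfl
  have hd : DenseRange e := by
    rw [DenseRange, dense_iff_closure_eq, Set.eq_univ_iff_forall]
    rintro ⟨y, hy⟩
    rw [closure_subtype]
    have : (Subtype.val '' Set.range e) = (J.range : Set E) := by
      ext z; simp [he]
    rw [this]; exact hy
  have hn : ∀ x, ‖J'.toLinearMap x‖ ≤ 1 * ‖e x‖ := by
    intro x; rw [one_mul]; exact (h x).le
  let W : M →L[ℂ] E := J'.toLinearMap.extendOfNorm e
  have hW : ∀ x, W (e x) = J' x := fun x => LinearMap.extendOfNorm_eq hd ⟨1, hn⟩ x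
  have hWn : ∀ y, ‖W y‖ = ‖y‖ := by
    intro y
    refine hd.induction_on (p := fun y => ‖W y‖ = ‖y‖) y (isClosed_eq (by fun_prop) (by fun_prop)) ?_
    intro x; rw [hW, h]; rfl
  have hWi : ∀ y z, inner ℂ (W y) (W z) = inner ℂ y z := by
    let Wi : M →ₗᵢ[ℂ] E := ⟨W.toLinearMap, hWn⟩
    intro y z; exact Wi.inner_map_map y z
  let U : E →L[ℂ] E := W.comp M.orthogonalProjectionOnto
  have hUU : ∀ y, adjoint U (U y) = (M.orthogonalProjectionOnto y : E) := by
    intro y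
    refine ext_inner_left ℂ fun z => ?_
    rw [adjoint_inner_right]
    change inner ℂ (W _) (W _) = _
    rw [hWi]
    rw [Submodule.coe_inner]
    have h3 := Submodule.inner_starProjection_left_eq_right M z (M.starProjection y)
    rw [Submodule.starProjection_eq_self_iff.2 (Submodule.starProjection_apply_mem M y)] at h3
    exact h3
  refine ⟨U, ?_, ?_, ?_⟩
  · intro x
    change W (M.orthogonalProjectionOnto (e x : E)) = _
    rw [Submodule.orthogonalProjectionOnto_mem_subspace_eq_self, hW]
  · intro x
    rw [hUU, ← he, Submodule.orthogonalProjectionOnto_mem_subspace_eq_self]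
  · intro y
    rw [hUU]
    change W (M.orthogonalProjectionOnto _) = W _
    rw [Submodule.orthogonalProjectionOnto_mem_subspace_eq_self]
    rfl

/-- Unitary dilation of a partial isometry. -/
lemma exists_dilation {E : Type} [NormedAddCommGroup E] [InnerProductSpace ℂ E] [CompleteSpace E]
    (U : E →L[ℂ] E) (hU : ∀ y, U (adjoint U (U y)) = U y) :
    ∃ W W' : WithLp 2 (E × E) →L[ℂ] WithLp 2 (E × E),
      (∀ p q, inner ℂ (W p) q = inner ℂ p (W' q)) ∧ (∀ p, W (W' p) = p) ∧ (∀ p, W' (W p) = p) ∧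
      (∀ x, adjoint U (U x) = x → W (WithLp.toLp 2 (x, 0)) = WithLp.toLp 2 (U x, 0)) := by
  let V := adjoint U
  have hV : ∀ y, V (U (V y)) = V y := by
    intro y
    refine ext_inner_left ℂ fun z => ?_
    simp only [V]
    rw [adjoint_inner_right, ← adjoint_inner_left, ← adjoint_inner_left, adjoint_adjoint, hU,
      adjoint_inner_right]
  have hUV : ∀ x y, inner ℂ (U x) y = inner ℂ x (V y) := fun x y => (adjoint_inner_right _ _ _).symm
  have hVU : ∀ x y, inner ℂ (V x) y = inner ℂ x (U y) := fun x y => adjoint_inner_left _ _ _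
  let f1 : WithLp 2 (E × E) →L[ℂ] E := WithLp.fstL 2 ℂ E E
  let f2 : WithLp 2 (E × E) →L[ℂ] E := WithLp.sndL 2 ℂ E E
  let mk : (WithLp 2 (E × E) →L[ℂ] E) → (WithLp 2 (E × E) →L[ℂ] E) →
    (WithLp 2 (E × E) →L[ℂ] WithLp 2 (E × E)) := fun a b =>
    ((WithLp.prodContinuousLinearEquiv 2 ℂ E E).symm.toContinuousLinearMap).comp (a.prod b)
  let W := mk (U.comp f1 + (f2 - U.comp (V.comp f2))) ((f1 - V.comp (U.comp f1)) - V.comp f2)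
  let W' := mk (V.comp f1 + (f2 - V.comp (U.comp f2))) ((f1 - U.comp (V.comp f1)) - U.comp f2)
  have hU' : ∀ y, U (V (U y)) = U y := hU
  have hW : ∀ x y, W (WithLp.toLp 2 (x, y)) =
      WithLp.toLp 2 (U x + (y - U (V y)), (x - V (U x)) - V y) := fun x y => rfl
  have hW' : ∀ x y, W' (WithLp.toLp 2 (x, y)) =
      WithLp.toLp 2 (V x + (y - V (U y)), (x - U (V x)) - U y) := fun x y => rfl
  refine ⟨W, W', ?_, ?_, ?_, ?_⟩
  · rintro ⟨x, y⟩ ⟨x', y'⟩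
    rw [hW, hW']
    simp only [WithLp.prod_inner_apply, inner_add_left, inner_sub_left, inner_add_right,
      inner_sub_right, hUV, hVU]
    ring
  · rintro ⟨x, y⟩
    rw [hW', hW]
    simp only [map_add, map_sub, hU', hV]
    congr 2 <;> abel
  · rintro ⟨x, y⟩
    rw [hW, hW']
    simp only [map_add, map_sub, hU', hV]
    congr 2 <;> abel
  · intro x hx
    rw [hW]
    have : V (U x) = x := hx
    simp [this]

lemma subnormal_of_isometries {H E : Type} [NormedAddCommGroup H] [InnerProductSpace ℂ H]
    [CompleteSpace H] [NormedAddCommGroup E] [InnerProductSpace ℂ E] [CompleteSpace E]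
    (S : H →L[ℂ] H) (J : H →ₗᵢ[ℂ] lp (fun _ : ℕ => E) 2)
    (hJ : ∀ (k : ℕ) x, ‖J (((k : ℂ) + 1) • S x - x) k‖ = ‖J x k‖) : IsSubnormal S := by
  let P := WithLp 2 (E × E)
  have key : ∀ k : ℕ, ∃ W W' : P →L[ℂ] P,
      (∀ p q, inner ℂ (W p) q = inner ℂ p (W' q)) ∧ (∀ p, W (W' p) = p) ∧ (∀ p, W' (W p) = p) ∧
      (∀ x : H, W (WithLp.toLp 2 (J x k, 0)) =
        WithLp.toLp 2 (J (((k : ℂ) + 1) • S x - x) k, 0)) := by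
    intro k
    let ev : lp (fun _ : ℕ => E) 2 →L[ℂ] E := lp.evalCLM ℂ (fun _ : ℕ => E) 2 k
    let J1 : H →L[ℂ] E := ev.comp J.toContinuousLinearMap
    let J2 : H →L[ℂ] E := J1.comp (((k : ℂ) + 1) • S - ContinuousLinearMap.id ℂ H)
    obtain ⟨U, h1, h2, h3⟩ := exists_partial_isometry J1 J2 (fun x => hJ k x)
    obtain ⟨W, W', w1, w2, w3, w4⟩ := exists_dilation U h3
    refine ⟨W, W', w1, w2, w3, fun x => ?_⟩
    have := w4 _ (h2 x)
    rw [h1] at this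
    exact this
  choose W W' w1 w2 w3 w4 using key
  have nW : ∀ k p, ‖W k p‖ = ‖p‖ := by
    intro k p
    rw [← sq_eq_sq₀ (norm_nonneg _) (norm_nonneg _), ← inner_self_eq_norm_sq (𝕜 := ℂ), w1, w3,
      inner_self_eq_norm_sq]
  have nW' : ∀ k p, ‖W' k p‖ = ‖p‖ := by
    intro k p; rw [← nW k (W' k p), w2]
  let r : ℕ → ℂ := fun k => ((((k : ℝ) + 1)⁻¹ : ℝ) : ℂ)
  have hr : ∀ k, ‖r k‖ ≤ 1 := by
    intro k
    simp only [r, Complex.norm_real, norm_inv]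
    apply inv_le_one_of_one_le₀
    rw [Real.norm_of_nonneg (by positivity)]
    linarith [Nat.cast_nonneg (α := ℝ) k]
  have hb : ∀ (k : ℕ) (p q : P), ‖q‖ = ‖p‖ → ‖r k • (p + q)‖ ≤ 2 * ‖p‖ := by
    intro k p q h
    rw [norm_smul]
    calc ‖r k‖ * ‖p + q‖ ≤ 1 * (‖p‖ + ‖q‖) := by gcongr; exacts [hr k, norm_add_le _ _]
      _ = 2 * ‖p‖ := by rw [h]; ring
  obtain ⟨N, hN⟩ := exists_lp_map (fun k => r k • (ContinuousLinearMap.id ℂ P + W k)) 2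
    (fun k p => hb k p _ (nW k p))
  obtain ⟨N', hN'⟩ := exists_lp_map (fun k => r k • (ContinuousLinearMap.id ℂ P + W' k)) 2
    (fun k p => hb k p _ (nW' k p))
  obtain ⟨I, hI⟩ := exists_lp_map
    (fun _ : ℕ => ((WithLp.prodContinuousLinearEquiv 2 ℂ E E).symm.toContinuousLinearMap).comp
      (ContinuousLinearMap.inl ℂ E E)) 1 (fun k x => by
        change ‖WithLp.toLp 2 (x, (0 : E))‖ ≤ _
        simp)
  have hI' : ∀ x k, I x k = WithLp.toLp 2 (x k, (0 : E)) := hI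
  have hadj : N' = adjoint N := by
    rw [eq_adjoint_iff]
    intro x y
    rw [lp.inner_eq_tsum, lp.inner_eq_tsum]
    congr 1; ext k
    rw [hN, hN']
    simp only [_root_.smul_apply, _root_.add_apply,
      ContinuousLinearMap.id_apply, inner_smul_left, inner_smul_right, inner_add_left,
      inner_add_right]
    rw [← inner_conj_symm (W' k (x k)), ← w1, inner_conj_symm]
    simp [r]
  refine ⟨{ K := lp (fun _ : ℕ => P) 2, J := ?_, N := N, normal := ?_, intertwine := ?_ }⟩
  · refine LinearIsometry.comp ⟨I.toLinearMap, fun x => ?_⟩ J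
    have : ‖I x‖ ^ 2 = ‖x‖ ^ 2 := by
      rw [← inner_self_eq_norm_sq (𝕜 := ℂ), ← inner_self_eq_norm_sq (𝕜 := ℂ), lp.inner_eq_tsum,
        lp.inner_eq_tsum]
      congr 2; ext k
      rw [hI']
      simp [WithLp.prod_inner_apply]
    exact (sq_eq_sq₀ (norm_nonneg _) (norm_nonneg _)).1 this
  · rw [← hadj]
    ext1 x
    ext1; funext k
    simp only [_root_.mul_apply_eq_comp, hN, hN']
    simp only [_root_.smul_apply, _root_.add_apply,
      ContinuousLinearMap.id_apply, map_smul, map_add, w2, w3]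
    module
  · intro x
    ext1; funext k
    change N (I (J x)) k = I (J (S x)) k
    rw [hN, hI', hI']
    simp only [_root_.smul_apply, _root_.add_apply,
      ContinuousLinearMap.id_apply, w4]
    rw [← WithLp.toLp_add, ← WithLp.toLp_smul]
    have hk : (k : ℂ) + 1 ≠ 0 := Nat.cast_add_one_ne_zero k
    have : r k • (J x k + J (((k : ℂ) + 1) • S x - x) k) = J (S x) k := by
      rw [map_sub, map_smul]
      simp only [lp.coeFn_sub, lp.coeFn_smul, Pi.sub_apply, Pi.smul_apply, add_sub_cancel, smul_smul, r]
      push_cast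
      rw [inv_mul_cancel₀ hk, one_smul]
    rw [Prod.mk_add_mk, Prod.smul_mk, this]
    simp

end OperatorPart
section LaguerrePart

open Polynomial MeasureTheory

/-- Laguerre polynomials. -/
def lag : ℕ → ℝ[X]
  | 0 => 1
  | n + 1 => lag n + C (((n : ℝ) + 1)⁻¹) * (X * (derivative (lag n) - lag n))

lemma lag_a (n : ℕ) : X * (derivative (lag n) - lag n) = C ((n : ℝ) + 1) * (lag (n + 1) - lag n) := by
  have h : C ((n : ℝ) + 1) * C (((n : ℝ) + 1)⁻¹) = 1 := by
    rw [← C_mul, mul_inv_cancel₀ (by positivity), C_1]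
  rw [lag]
  linear_combination (-(X * (derivative (lag n) - lag n))) * h

lemma lag_b (n : ℕ) : X * derivative (lag (n + 1)) = C ((n : ℝ) + 1) * (lag (n + 1) - lag n) := by
  induction n with
  | zero => simp [lag]
  | succ n ih =>
    have h0 := lag_a n
    have h1 := lag_a (n + 1)
    have h2 := congrArg derivative h1
    have h3 := congrArg derivative ih
    simp only [derivative_mul, derivative_X, derivative_C, derivative_sub, one_mul, zero_mul,
      zero_add] at h2 h3
    simp only [Nat.cast_add, Nat.cast_one, C_add, C_1] at *
    have hne : (C (n : ℝ) + 1 + 1 : ℝ[X]) ≠ 0 := by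
      have : (C (n : ℝ) + 1 + 1 : ℝ[X]) = C ((n : ℝ) + 1 + 1) := by simp
      rw [this, Ne, C_eq_zero]; positivity
    refine mul_left_cancel₀ hne ?_
    linear_combination (-X) * h2 + (C (n : ℝ) + 1 + 1) * h1 + X * h3 + (C (n : ℝ) + 1) * ih - X * ih -
      (C (n : ℝ) + 1) * h0

/-- Linear functional with prescribed moments. -/
def mom (w : ℕ → ℝ) : ℝ[X] →ₗ[ℝ] ℝ :=
  Polynomial.lsum (fun i => (LinearMap.id : ℝ →ₗ[ℝ] ℝ).smulRight (w i))

lemma mom_monomial (w : ℕ → ℝ) (i : ℕ) (a : ℝ) : mom w (monomial i a) = a * w i := by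
  simp [mom, Polynomial.lsum_apply]

lemma mom_C_mul (w : ℕ → ℝ) (a : ℝ) (p : ℝ[X]) : mom w (C a * p) = a * mom w p := by
  rw [← smul_eq_C_mul, map_smul, smul_eq_mul]

lemma mom_rec (w : ℕ → ℝ) (c d : ℝ) (h : ∀ i : ℕ, (c + i) * w i = d * w (i + 1)) (q : ℝ[X]) :
    mom w (C c * q + X * derivative q - C d * (X * q)) = 0 := by
  induction q using Polynomial.induction_on' with
  | add p q hp hq =>
    have : C c * (p + q) + X * derivative (p + q) - C d * (X * (p + q)) =
      (C c * p + X * derivative p - C d * (X * p)) + (C c * q + X * derivative q - C d * (X * q)) := by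
      rw [derivative_add]; ring
    rw [this, map_add, hp, hq, add_zero]
  | monomial i a =>
    have h1 : X * derivative (monomial i a) = monomial i (a * i) := by
      cases i with
      | zero => simp
      | succ i => rw [derivative_monomial, X_mul_monomial]; rfl
    rw [h1, X_mul_monomial, map_sub, map_add, mom_C_mul, mom_C_mul]
    simp only [mom_monomial]
    linear_combination a * h i

lemma lag_orth (n m : ℕ) : mom (fun i => (i.factorial : ℝ)) (lag n * lag m) = if n = m then 1 else 0 := by
  set E := mom (fun i => (i.factorial : ℝ)) with hE
  have hrec : ∀ q, E (C 1 * q + X * derivative q - C 1 * (X * q)) = 0 := by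
    apply mom_rec
    intro i
    rw [Nat.factorial_succ]; push_cast; ring
  have r0 : ∀ n : ℕ, ((n : ℝ) + 1) * E (lag (n + 1) * lag 0) = n * E (lag n * lag 0) := by
    intro n
    have h1 := hrec (lag n * lag 0)
    have h2 : C 1 * (lag n * lag 0) + X * derivative (lag n * lag 0) - C 1 * (X * (lag n * lag 0))
        = lag n * lag 0 + C ((n : ℝ) + 1) * (lag (n + 1) * lag 0 - lag n * lag 0) := by
      have := lag_a n
      rw [show lag 0 = 1 from rfl, C_1]; simp only [mul_one, one_mul]
      linear_combination this
    rw [h2, map_add, mom_C_mul, map_sub] at h1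
    linear_combination h1
  have r1 : ∀ n m : ℕ, ((n : ℝ) + 1) * E (lag (n + 1) * lag (m + 1)) =
      ((n : ℝ) - (m + 1)) * E (lag n * lag (m + 1)) + (m + 1) * E (lag n * lag m) := by
    intro n m
    have h1 := hrec (lag n * lag (m + 1))
    have h2 : C 1 * (lag n * lag (m + 1)) + X * derivative (lag n * lag (m + 1)) -
        C 1 * (X * (lag n * lag (m + 1)))
        = lag n * lag (m + 1) + C ((n : ℝ) + 1) * (lag (n + 1) * lag (m + 1) - lag n * lag (m + 1))
          + C ((m : ℝ) + 1) * (lag n * lag (m + 1) - lag n * lag m) := by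
      have h3 := lag_a n
      have h4 := lag_b m
      rw [derivative_mul, C_1]
      linear_combination lag (m + 1) * h3 + lag n * h4
    rw [h2, map_add, map_add, mom_C_mul, mom_C_mul, map_sub, map_sub] at h1
    linear_combination h1
  have z0 : ∀ n : ℕ, E (lag (n + 1) * lag 0) = 0 := by
    intro n
    induction n with
    | zero => simpa using r0 0
    | succ n ih =>
      have := r0 (n + 1)
      rw [ih, mul_zero] at this
      exact (mul_eq_zero.1 this).resolve_left (by positivity)
  have z00 : E (lag 0 * lag 0) = 1 := by
    have : lag 0 * lag 0 = monomial 0 (1 : ℝ) := by simp [lag]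
    rw [this, hE, mom_monomial]; simp
  induction n generalizing m with
  | zero =>
    cases m with
    | zero => simpa using z00
    | succ m => rw [mul_comm, z0]; simp
  | succ n ih =>
    cases m with
    | zero => rw [z0]; simp
    | succ m =>
      have := r1 n m
      rw [ih, ih] at this
      have hn : (n : ℝ) + 1 ≠ 0 := by positivity
      refine mul_left_cancel₀ hn (this.trans ?_)
      by_cases h : n = m
      · subst h; simp
      · by_cases h' : n = m + 1
        · subst h'; simp
        · simp [h, h']

/-- Moments of `x^k e^{-2x} / k!`. -/
def wk (k i : ℕ) : ℝ := ((i + k).factorial : ℝ) / (k.factorial * 2 ^ (i + k + 1))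

lemma wk_rec (k i : ℕ) : ((k : ℝ) + 1 + i) * wk k i = 2 * wk k (i + 1) := by
  unfold wk
  rw [show i + 1 + k = (i + k) + 1 by ring, Nat.factorial_succ, pow_succ _ (i + k + 1)]
  have := Nat.factorial_pos k
  field_simp
  push_cast; ring

lemma wk_hasSum (i : ℕ) : HasSum (fun k => wk k i) (i.factorial : ℝ) := by
  have h := hasSum_choose_mul_geometric_of_norm_lt_one (𝕜 := ℝ) i (r := 1 / 2) (by norm_num)
  have h2 := h.mul_left ((i.factorial : ℝ) / 2 ^ (i + 1))
  convert! h2 using 1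
  · ext k
    unfold wk
    have e : ((k + i).choose i : ℝ) = ((i + k).factorial : ℝ) / (i.factorial * k.factorial) := by
      rw [add_comm k i, Nat.cast_add_choose]
    rw [e, one_div, inv_pow]
    have := Nat.factorial_pos k
    have := Nat.factorial_pos i
    field_simp
    ring
  · have : (1 - 1 / 2 : ℝ) = 1 / 2 := by norm_num
    rw [this]
    field_simp
    rw [← mul_pow]; norm_num

lemma mom_hasSum (p : ℝ[X]) : HasSum (fun k => mom (wk k) p) (mom (fun i => (i.factorial : ℝ)) p) := by
  induction p using Polynomial.induction_on' with
  | add p q hp hq => simpa only [map_add] using hp.add hq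
  | monomial i a =>
    simp only [mom_monomial]
    exact (wk_hasSum i).mul_left a

lemma gram_rec (k n m : ℕ) :
    ((k : ℝ) + 1) * mom (wk k) (lag n * lag m)
      + (m + 1) * (mom (wk k) (lag n * lag (m + 1)) - mom (wk k) (lag n * lag m))
      + (n + 1) * (mom (wk k) (lag (n + 1) * lag m) - mom (wk k) (lag n * lag m)) = 0 := by
  have h1 := mom_rec (wk k) (k + 1) 2 (wk_rec k) (lag n * lag m)
  have h2 : C ((k : ℝ) + 1) * (lag n * lag m) + X * derivative (lag n * lag m) -
      C 2 * (X * (lag n * lag m)) = C ((k : ℝ) + 1) * (lag n * lag m)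
        + C ((m : ℝ) + 1) * (lag n * lag (m + 1) - lag n * lag m)
        + C ((n : ℝ) + 1) * (lag (n + 1) * lag m - lag n * lag m) := by
    have h3 := lag_a n
    have h4 := lag_a m
    rw [derivative_mul, show C (2 : ℝ) = 1 + 1 by rw [← C_1, ← C_add]; norm_num]
    linear_combination lag m * h3 + lag n * h4
  rw [h2, map_add, map_add, mom_C_mul, mom_C_mul, mom_C_mul, map_sub, map_sub] at h1
  exact h1

lemma integral_poly (k : ℕ) (p : ℝ[X]) :
    IntegrableOn (fun x : ℝ => p.eval x * (x ^ k / k.factorial * Real.exp (-2 * x))) (Set.Ioi 0) ∧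
    ∫ x in Set.Ioi (0 : ℝ), p.eval x * (x ^ k / k.factorial * Real.exp (-2 * x)) = mom (wk k) p := by
  induction p using Polynomial.induction_on' with
  | add p q hp hq =>
    simp only [eval_add, add_mul, map_add]
    exact ⟨hp.1.add hq.1, by rw [integral_add hp.1 hq.1, hp.2, hq.2]⟩
  | monomial i a =>
    have hw : wk k i ≠ 0 := by unfold wk; positivity
    have h := Real.integral_rpow_mul_exp_neg_mul_Ioi (a := ((i + k : ℕ) : ℝ) + 1) (r := 2)
      (by positivity) (by norm_num)
    have h2 : ∫ x in Set.Ioi (0 : ℝ), x ^ (i + k) * Real.exp (-2 * x) = wk k i * k.factorial := by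
      rw [Real.Gamma_nat_eq_factorial] at h
      have e : wk k i * k.factorial = (1 / 2 : ℝ) ^ (((i + k : ℕ) : ℝ) + 1) * ((i + k).factorial : ℝ) := by
        rw [← Nat.cast_succ, Real.rpow_natCast]
        unfold wk
        have := Nat.factorial_pos k
        rw [one_div, inv_pow]
        field_simp
      rw [e, ← h]
      refine setIntegral_congr_fun measurableSet_Ioi fun x hx => ?_
      simp only [add_sub_cancel_right, Real.rpow_natCast, neg_mul]
    have hf : (0 : ℝ) < k.factorial := by positivity
    have h3 : IntegrableOn (fun x : ℝ => x ^ (i + k) * Real.exp (-2 * x)) (Set.Ioi 0) := by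
      by_contra hc
      rw [integral_undef hc] at h2
      exact (mul_ne_zero hw hf.ne') h2.symm
    have e : ∀ x : ℝ, (monomial i a).eval x * (x ^ k / k.factorial * Real.exp (-2 * x)) =
        (a / k.factorial) * (x ^ (i + k) * Real.exp (-2 * x)) := by
      intro x
      rw [eval_monomial, pow_add]; ring
    simp only [e]
    refine ⟨h3.const_mul _, ?_⟩
    rw [integral_const_mul, h2, mom_monomial]
    field_simp

lemma exists_gram : ∃ g : ℕ → ℕ → Lp ℂ 2 (volume.restrict (Set.Ioi (0 : ℝ))),
    ∀ k n m, inner ℂ (g k n) (g k m) = ((mom (wk k) (lag n * lag m) : ℝ) : ℂ) := by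
  let F : ℕ → ℕ → ℝ → ℂ := fun k n x =>
    (((lag n).eval x * (Real.sqrt (x ^ k / k.factorial) * Real.exp (-x)) : ℝ) : ℂ)
  have hc : ∀ k n, Continuous (F k n) := by
    intro k n
    have := (lag n).continuous
    simp only [F]
    fun_prop
  have hm : ∀ k n m, ∀ x ∈ Set.Ioi (0 : ℝ), inner ℂ (F k n x) (F k m x) =
      (((lag n * lag m).eval x * (x ^ k / k.factorial * Real.exp (-2 * x)) : ℝ) : ℂ) := by
    intro k n m x hx
    have hx : 0 < x := hx
    simp only [F, RCLike.inner_apply, Complex.conj_ofReal]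
    rw [← Complex.ofReal_mul]
    congr 1
    have h1 : Real.sqrt (x ^ k / k.factorial) * Real.sqrt (x ^ k / k.factorial) = x ^ k / k.factorial :=
      Real.mul_self_sqrt (by positivity)
    have h2 : Real.exp (-x) * Real.exp (-x) = Real.exp (-2 * x) := by
      rw [← Real.exp_add]; congr 1; ring
    rw [eval_mul]
    linear_combination (eval x (lag m) * eval x (lag n)) * (Real.exp (-x) * Real.exp (-x) * h1 + x ^ k / k.factorial * h2)
  have hL : ∀ k n, MemLp (F k n) 2 (volume.restrict (Set.Ioi (0 : ℝ))) := by
    intro k n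
    rw [memLp_two_iff_integrable_sq_norm (hc k n).aestronglyMeasurable]
    refine (integral_poly k (lag n * lag n)).1.congr_fun ?_ measurableSet_Ioi
    intro x hx
    have := hm k n n x hx
    rw [inner_self_eq_norm_sq_to_K] at this
    simp only
    exact (Complex.ofReal_injective (this.symm.trans (Complex.ofReal_pow _ _).symm))
  refine ⟨fun k n => (hL k n).toLp _, fun k n m => ?_⟩
  rw [L2.inner_def, ← (integral_poly k (lag n * lag m)).2]
  refine Eq.trans ?_ (integral_ofReal (𝕜 := ℂ))
  refine integral_congr_ae ?_
  filter_upwards [(hL k n).coeFn_toLp, (hL k m).coeFn_toLp, ae_restrict_mem measurableSet_Ioi]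
    with x h1 h2 h3
  rw [h1, h2, hm k n m x h3]
  rfl

lemma exists_onfamily : ∃ G : ℕ → lp (fun _ : ℕ => Lp ℂ 2 (volume.restrict (Set.Ioi (0 : ℝ)))) 2,
    Orthonormal ℂ G ∧
    ∀ k n m, inner ℂ (G n k) (G m k) = ((mom (wk k) (lag n * lag m) : ℝ) : ℂ) := by
  obtain ⟨g, hg⟩ := exists_gram
  have hmem : ∀ n, Memℓp (fun k => g k n) 2 := by
    intro n
    apply memℓp_gen
    have h := (mom_hasSum (lag n * lag n)).summable
    convert! h using 1
    ext k
    have := hg k n n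
    rw [inner_self_eq_norm_sq_to_K] at this
    have h2 : ‖g k n‖ ^ 2 = mom (wk k) (lag n * lag n) := 
      Complex.ofReal_injective ((Complex.ofReal_pow _ _).trans this)
    rw [← h2]; norm_cast
  refine ⟨fun n => ⟨_, hmem n⟩, ?_, fun k n m => hg k n m⟩
  rw [orthonormal_iff_ite]
  intro n m
  rw [lp.inner_eq_tsum]
  simp only [hg]
  rw [← Complex.ofReal_tsum, (mom_hasSum _).tsum_eq, lag_orth]
  split_ifs <;> simp

end LaguerrePart
section TreePart

open ContinuousLinearMap

namespace TreeData

variable {V : Type} (T : TreeData V)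

lemma dep_spec (v : V) : T.par^[T.dep v] v = T.root := by
  classical
  exact Nat.find_spec (T.hroot v)

lemma dep_le {v : V} {n : ℕ} (h : T.par^[n] v = T.root) : T.dep v ≤ n := by
  classical
  exact Nat.find_min' (T.hroot v) h

lemma dep_root : T.dep T.root = 0 := Nat.le_zero.1 (T.dep_le rfl)

lemma eq_root {v : V} (h : T.dep v = 0) : v = T.root := by
  have := T.dep_spec v
  rwa [h] at this

lemma dep_par {v : V} (h : v ≠ T.root) : T.dep v = T.dep (T.par v) + 1 := by
  apply le_antisymm
  · apply T.dep_le
    rw [Function.iterate_succ_apply, T.dep_spec]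
  · obtain ⟨n, hn⟩ : ∃ n, T.dep v = n + 1 :=
      Nat.exists_eq_succ_of_ne_zero (fun h0 => h (T.eq_root h0))
    rw [hn]
    have := T.dep_spec v
    rw [hn, Function.iterate_succ_apply] at this
    exact Nat.succ_le_succ (T.dep_le this)

lemma dep_chi {u v : V} (h : v ∈ T.chi u) : T.dep v = T.dep u + 1 := by
  rw [T.dep_par h.1, h.2]

lemma dep_iter (v : V) (j : ℕ) (hj : j ≤ T.dep v) : T.dep (T.par^[j] v) = T.dep v - j := by
  induction j with
  | zero => rfl
  | succ j ih =>
    have ih := ih (by omega)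
    rw [Function.iterate_succ_apply']
    have hne : T.par^[j] v ≠ T.root := by
      intro h0
      rw [h0, dep_root] at ih
      omega
    have := T.dep_par hne
    omega

lemma cesaro_single [DecidableEq V] (u t : V) :
    T.cesaro (Pi.single u 1) t = if T.dep u ≤ T.dep t ∧ T.par^[T.dep t - T.dep u] t = u then
      ((T.dep t : ℂ) + 1)⁻¹ else 0 := by
  unfold cesaro
  split_ifs with h
  · rw [Finset.sum_eq_single (T.dep t - T.dep u), h.2, Pi.single_eq_same, mul_one]
    · intro j hj hne
      apply Pi.single_eq_of_ne
      intro he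
      have := T.dep_iter t j (by simpa [Nat.lt_succ_iff] using hj)
      rw [he] at this
      have hj' := Finset.mem_range.1 hj
      omega
    · intro h'
      exact absurd (Finset.mem_range.2 (by omega)) h'
  · rw [Finset.sum_eq_zero, mul_zero]
    intro j hj
    apply Pi.single_eq_of_ne
    intro he
    have hj' := Finset.mem_range.1 hj
    have := T.dep_iter t j (by omega)
    rw [he] at this
    apply h
    refine ⟨by omega, ?_⟩
    rw [show T.dep t - T.dep u = j by omega, he]

end TreeData

lemma sum_inv_sq_le (N : ℕ) : Summable (fun i : ℕ => (((N + i : ℕ) : ℝ) + 1)⁻¹ ^ 2) ∧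
    ∑' i : ℕ, (((N + i : ℕ) : ℝ) + 1)⁻¹ ^ 2 ≤ ((N : ℝ) + 1 / 2)⁻¹ := by
  have hb : ∀ n, ∑ i ∈ Finset.range n, (((N + i : ℕ) : ℝ) + 1)⁻¹ ^ 2 ≤
      ((N : ℝ) + 1 / 2)⁻¹ - ((N : ℝ) + n + 1 / 2)⁻¹ := by
    intro n
    induction n with
    | zero => simp
    | succ n ih =>
      rw [Finset.sum_range_succ]
      have : (((N + n : ℕ) : ℝ) + 1)⁻¹ ^ 2 ≤
          ((N : ℝ) + n + 1 / 2)⁻¹ - ((N : ℝ) + (n + 1 : ℕ) + 1 / 2)⁻¹ := by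
        push_cast
        have h1 : (0 : ℝ) < (N : ℝ) + n + 1 / 2 := by positivity
        have h2 : (0 : ℝ) < (N : ℝ) + (n + 1) + 1 / 2 := by positivity
        have h3 : (0 : ℝ) < (N : ℝ) + n + 1 := by positivity
        rw [inv_sub_inv h1.ne' h2.ne', inv_pow, ← one_div, div_le_div_iff₀ (by positivity) (by positivity)]
        nlinarith
      linarith
  have hb' : ∀ n, ∑ i ∈ Finset.range n, (((N + i : ℕ) : ℝ) + 1)⁻¹ ^ 2 ≤ ((N : ℝ) + 1 / 2)⁻¹ := by
    intro n
    have : 0 ≤ ((N : ℝ) + n + 1 / 2)⁻¹ := by positivity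
    linarith [hb n]
  exact ⟨summable_of_sum_range_le (fun i => by positivity) hb',
    Real.tsum_le_of_sum_range_le (fun i => by positivity) hb'⟩

lemma hypo {H : Type} [NormedAddCommGroup H] [InnerProductSpace ℂ H] [CompleteSpace H]
    (S : H →L[ℂ] H) (h : IsSubnormal S) (f g : H) : ‖inner ℂ f (S g)‖ ≤ ‖S f‖ * ‖g‖ := by
  obtain ⟨w⟩ := h
  letI := w.grp
  letI := w.ips
  letI := w.cpl
  have h1 : inner ℂ f (S g) = inner ℂ (adjoint w.N (w.J f)) (w.J g) := by
    rw [adjoint_inner_left, w.intertwine, w.J.inner_map_map]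
  have h2 : ‖adjoint w.N (w.J f)‖ = ‖S f‖ := by
    rw [← w.J.norm_map (S f), ← w.intertwine, ← sq_eq_sq₀ (norm_nonneg _) (norm_nonneg _),
      ← inner_self_eq_norm_sq (𝕜 := ℂ), ← inner_self_eq_norm_sq (𝕜 := ℂ), adjoint_inner_left,
      ← adjoint_inner_right]
    congr 2
    exact (congrArg (fun A : w.K →L[ℂ] w.K => A (w.J f)) w.normal).symm
  rw [h1, ← h2, ← w.J.norm_map g]
  exact norm_inner_le_norm _ _

lemma no_branch {V : Type} [DecidableEq V] (T : TreeData V) (c : V → V)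
    (N : ℕ) (hc : ∀ u, c u ∈ T.chi u)
    (hu : ∀ w, N < T.dep w → w = c (T.par w)) (u v : V) (hduN : T.dep u = N) (hdvN : T.dep v = N)
    (huv : u ≠ v)
    (C : L2 V →L[ℂ] L2 V) (hC : ∀ (f : L2 V) (v : V), C f v = T.cesaro ⇑f v)
    (hS : IsSubnormal C) : False := by
  have hN : 0 < N := by
    rcases Nat.eq_zero_or_pos N with h | h
    · exact absurd ((T.eq_root (hduN.trans h)).trans (T.eq_root (hdvN.trans h)).symm) huv
    · exact h
  let e : V → L2 V := fun v => lp.single 2 v (1 : ℂ)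
  have hCe : ∀ a t, T.dep a = N → C (e a) t = if N ≤ T.dep t ∧ T.par^[T.dep t - N] t = a then
      ((T.dep t : ℂ) + 1)⁻¹ else 0 := by
    intro a t ha
    rw [hC, ← ha]
    exact T.cesaro_single a t
  have hdesc : ∀ i t, T.dep t = N + i → t = c^[i] (T.par^[i] t) := by
    intro i
    induction i with
    | zero => intro t _; rfl
    | succ i ih =>
      intro t ht
      have h1 := hu t (by omega)
      have h2 : T.dep (T.par t) = N + i := by
        have := T.dep_chi (hc (T.par t)); rw [← h1] at this; omega
      rw [Function.iterate_succ_apply', Function.iterate_succ_apply, ← ih _ h2]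
      exact h1
  have hdc : ∀ a i, T.dep a = N → T.dep (c^[i] a) = N + i := by
    intro a i ha
    induction i with
    | zero => simpa using ha
    | succ i ih => rw [Function.iterate_succ_apply', T.dep_chi (hc _), ih]; ring
  have hpc : ∀ a i, T.par^[i] (c^[i] a) = a := by
    intro a i
    exact Function.LeftInverse.iterate (fun x => (hc x).2) i a
  have hnorm : ∀ a, T.dep a = N → ‖C (e a)‖ ^ 2 ≤ ((N : ℝ) + 1 / 2)⁻¹ := by
    intro a ha
    have h1 : ‖C (e a)‖ ^ 2 = ∑' t, ‖C (e a) t‖ ^ 2 := by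
      have := lp.norm_rpow_eq_tsum (p := 2) (by norm_num) (C (e a))
      simpa using this
    have hinj : Function.Injective (fun i : ℕ => c^[i] a) := by
      intro i j hij
      have := congrArg T.dep hij
      simp only [hdc a _ ha] at this
      omega
    rw [h1, ← hinj.tsum_eq]
    · refine le_trans (le_of_eq ?_) (sum_inv_sq_le N).2
      congr 1; ext i
      rw [hCe a _ ha, hdc a i ha, Nat.add_sub_cancel_left, hpc, if_pos ⟨by omega, rfl⟩, norm_inv]
      congr 2
      rw [← Nat.cast_succ, Complex.norm_natCast, Nat.cast_succ]
    · intro t ht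
      have : C (e a) t ≠ 0 := by
        intro h0; apply ht; simp [h0]
      rw [hCe a t ha] at this
      have hh : N ≤ T.dep t ∧ T.par^[T.dep t - N] t = a := by
        by_contra hcon; exact this (if_neg hcon)
      refine ⟨T.dep t - N, ?_⟩
      have := hdesc (T.dep t - N) t (by omega)
      rw [hh.2] at this
      exact this.symm
  have horth : inner ℂ (C (e u)) (C (e v)) = 0 := by
    rw [lp.inner_eq_tsum]
    convert tsum_zero with t
    rw [hCe u t hduN, hCe v t hdvN]
    split_ifs with h1 h2
    · exact absurd (h1.2.symm.trans h2.2) huv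
    all_goals simp
  have hCf : ‖C (e u + e v)‖ ^ 2 ≤ 2 * ((N : ℝ) + 1 / 2)⁻¹ := by
    rw [map_add, norm_add_sq (𝕜 := ℂ), horth]
    simp only [map_zero, mul_zero, add_zero]
    linarith [hnorm u hduN, hnorm v hdvN]
  let g : L2 V := ∑ j ∈ Finset.range (N + 1), (e (T.par^[j] u) + e (T.par^[j] v))
  have hein : ∀ (a : V) (h : L2 V), inner ℂ (e a) h = h a := by
    intro a h; simp only [e]; rw [lp.inner_single_left]; simp
  have hg : ∀ h : L2 V, inner ℂ g h = ∑ j ∈ Finset.range (N + 1), (h (T.par^[j] u) + h (T.par^[j] v)) := by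
    intro h
    simp only [g, sum_inner, inner_add_left, hein]
  have hfg : inner ℂ (e u + e v) (C g) = ((N : ℂ) + 1)⁻¹ * inner ℂ g g := by
    rw [inner_add_left, hein, hein, hC, hC, hg g, Finset.sum_add_distrib]
    unfold TreeData.cesaro
    rw [hduN, hdvN]; ring
  have hgre : ∀ a, (a = u ∨ a = v) → (N : ℝ) + 2 ≤ ∑ i ∈ Finset.range (N + 1), (g (T.par^[i] a)).re := by
    intro a ha
    have hgw : ∀ w, (g w).re = ∑ j ∈ Finset.range (N + 1), (if w = T.par^[j] u then (1 : ℝ) else 0)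
        + ∑ j ∈ Finset.range (N + 1), (if w = T.par^[j] v then (1 : ℝ) else 0) := by
      intro w
      have he : ∀ a, (e a w).re = if w = a then (1 : ℝ) else 0 := by
        intro a
        simp only [e, lp.single_apply, Pi.single_apply]
        split_ifs <;> simp
      simp only [g, lp.coeFn_sum, Finset.sum_apply, lp.coeFn_add, Pi.add_apply, Complex.re_sum,
        Complex.add_re, he, Finset.sum_add_distrib]
    have hone : ∀ (b w : V) (i : ℕ), i ∈ Finset.range (N + 1) → w = T.par^[i] b →
        1 ≤ ∑ j ∈ Finset.range (N + 1), (if w = T.par^[j] b then (1 : ℝ) else 0) := by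
      intro b w i hi hw
      have := Finset.single_le_sum (f := fun j => if w = T.par^[j] b then (1 : ℝ) else 0)
        (fun j _ => by split_ifs <;> norm_num) hi
      simpa [← hw] using this
    have hz : ∀ (b w : V), 0 ≤ ∑ j ∈ Finset.range (N + 1), (if w = T.par^[j] b then (1 : ℝ) else 0) :=
      fun b w => Finset.sum_nonneg (fun j _ => by split_ifs <;> norm_num)
    have hNm : N ∈ Finset.range (N + 1) := Finset.self_mem_range_succ N
    have hru : T.par^[N] u = T.root := by rw [← hduN]; exact T.dep_spec u
    have hrv : T.par^[N] v = T.root := by rw [← hdvN]; exact T.dep_spec v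
    have hlow : ∀ i ∈ Finset.range (N + 1), 1 + (if i = N then (1 : ℝ) else 0) ≤ (g (T.par^[i] a)).re := by
      intro i hi
      rw [hgw]
      split_ifs with h
      · subst h
        have hra : T.par^[i] a = T.root := by rcases ha with rfl | rfl <;> assumption
        have := hone u (T.par^[i] a) i hi (hra.trans hru.symm)
        have := hone v (T.par^[i] a) i hi (hra.trans hrv.symm)
        linarith
      · rcases ha with rfl | rfl
        · have := hone a (T.par^[i] a) i hi rfl
          have := hz v (T.par^[i] a)
          linarith
        · have := hone a (T.par^[i] a) i hi rfl
          have := hz u (T.par^[i] a)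
          linarith
    refine le_trans (le_of_eq ?_) (Finset.sum_le_sum hlow)
    rw [Finset.sum_add_distrib, Finset.sum_ite_eq' , if_pos hNm]
    simp; ring
  have hgn : 2 * ((N : ℝ) + 2) ≤ ‖g‖ ^ 2 := by
    rw [← inner_self_eq_norm_sq (𝕜 := ℂ), hg g]
    have h1 := hgre u (Or.inl rfl)
    have h2 := hgre v (Or.inr rfl)
    simp only [RCLike.re_to_complex, Complex.re_sum, Complex.add_re, Finset.sum_add_distrib]
    linarith
  have hy := hypo C hS (e u + e v) g
  rw [hfg, inner_self_eq_norm_sq_to_K, norm_mul, norm_inv, ← Nat.cast_succ, Complex.norm_natCast] at hy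
  simp only [norm_pow, Complex.coe_algebraMap, Complex.norm_real, norm_norm] at hy
  have hgpos : 0 < ‖g‖ := by
    rcases (norm_nonneg g).eq_or_lt with h | h
    · rw [← h] at hgn; norm_num at hgn; nlinarith [Nat.cast_nonneg (α := ℝ) N]
    · exact h
  have hN1 : (0 : ℝ) < (N.succ : ℝ) := by positivity
  have h5 : ‖g‖ ≤ N.succ * ‖C (e u + e v)‖ := by
    rw [inv_mul_le_iff₀ hN1] at hy
    have : ‖g‖ * ‖g‖ ≤ (N.succ * ‖C (e u + e v)‖) * ‖g‖ := by nlinarith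
    exact le_of_mul_le_mul_right this hgpos
  have h6 : ‖g‖ ^ 2 ≤ (N.succ : ℝ) ^ 2 * (2 * ((N : ℝ) + 1 / 2)⁻¹) := by
    calc ‖g‖ ^ 2 ≤ (N.succ * ‖C (e u + e v)‖) ^ 2 := by gcongr
      _ = (N.succ : ℝ) ^ 2 * ‖C (e u + e v)‖ ^ 2 := by ring
      _ ≤ _ := by gcongr
  have h7 := hgn.trans h6
  have hNp : (0 : ℝ) < (N : ℝ) := by exact_mod_cast hN
  have hh : (0 : ℝ) < (N : ℝ) + 1 / 2 := by positivity
  rw [← mul_assoc, ← div_eq_mul_inv, le_div_iff₀ hh] at h7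
  push_cast at h7
  nlinarith

lemma exists_stable {V : Type} (T : TreeData V) (c : V → V) (hc : ∀ u, c u ∈ T.chi u)
    (m : ℕ) (hm : ∀ n : ℕ, (T.level n).encard ≤ m) (x a b : V) (ha : a ∈ T.chi x) (hb : b ∈ T.chi x)
    (hab : a ≠ b) : ∃ N u v, T.dep u = N ∧ T.dep v = N ∧ u ≠ v ∧
      ∀ w, N < T.dep w → w = c (T.par w) := by
  have hfin : ∀ n, (T.level n).Finite := fun n =>
    Set.finite_of_encard_le_coe (hm n)
  have hinj : ∀ n, Set.InjOn c (T.level n) := by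
    intro n y _ z _ hyz
    rw [← (hc y).2, hyz, (hc z).2]
  have hmaps : ∀ n, Set.MapsTo c (T.level n) (T.level (n + 1)) := by
    intro n y hy
    have := T.dep_chi (hc y)
    simp only [TreeData.level, Set.mem_setOf_eq] at *
    omega
  have hmono : Monotone (fun n => (T.level n).ncard) := by
    refine monotone_nat_of_le_succ fun n => ?_
    rw [← Set.ncard_image_of_injOn (hinj n)]
    exact Set.ncard_le_ncard (hmaps n).image_subset (hfin _)
  have hbd : ∀ n, (T.level n).ncard ≤ m := by
    intro n
    have := hm n
    rw [← (hfin n).cast_ncard_eq] at this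
    exact_mod_cast this
  obtain ⟨N, hNmax⟩ : ∃ N, ∀ n, (T.level n).ncard ≤ (T.level N).ncard := by
    have hne : (Set.range fun n => (T.level n).ncard).Nonempty := ⟨_, 0, rfl⟩
    have hbdd : BddAbove (Set.range fun n => (T.level n).ncard) := ⟨m, by rintro _ ⟨n, rfl⟩; exact hbd n⟩
    obtain ⟨N, hN⟩ := Nat.sSup_mem hne hbdd
    exact ⟨N, fun n => (le_csSup hbdd ⟨n, rfl⟩).trans hN.ge⟩
  have h2 : 1 < (T.level N).ncard := by
    refine lt_of_lt_of_le ?_ (hNmax (T.dep x + 1))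
    rw [Set.one_lt_ncard (hfin _)]
    exact ⟨a, T.dep_chi ha, b, T.dep_chi hb, hab⟩
  obtain ⟨u, hu, v, hv, huv⟩ := (Set.one_lt_ncard (hfin _)).1 h2
  refine ⟨N, u, v, hu, hv, huv, ?_⟩
  intro w hw
  obtain ⟨n, hn⟩ : ∃ n, T.dep w = n + 1 := ⟨T.dep w - 1, by omega⟩
  have himg : c '' T.level n = T.level (n + 1) := by
    refine Set.eq_of_subset_of_ncard_le (hmaps n).image_subset ?_ (hfin _)
    rw [Set.ncard_image_of_injOn (hinj n)]
    exact (hNmax _).trans (hmono (by omega : N ≤ n))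
  have : w ∈ c '' T.level n := by rw [himg]; exact hn
  obtain ⟨y, _, rfl⟩ := this
  rw [(hc y).2]

lemma abstract_gram {E : Type*} [NormedAddCommGroup E] [InnerProductSpace ℂ E] (γ : ℕ → E)
    (k n l : ℕ) (h : ((k : ℂ) + 1) * inner ℂ (γ n) (γ l)
      + (l + 1) * (inner ℂ (γ n) (γ (l + 1)) - inner ℂ (γ n) (γ l))
      + (n + 1) * (inner ℂ (γ (n + 1)) (γ l) - inner ℂ (γ n) (γ l)) = 0) :
    inner ℂ (((k : ℂ) + 1) • γ n - ((n : ℂ) + 1) • (γ n - γ (n + 1)))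
      (((k : ℂ) + 1) • γ l - ((l : ℂ) + 1) • (γ l - γ (l + 1))) =
    inner ℂ (((n : ℂ) + 1) • (γ n - γ (n + 1))) (((l : ℂ) + 1) • (γ l - γ (l + 1))) := by
  simp only [inner_sub_left, inner_sub_right, inner_smul_left, inner_smul_right, map_add,
      map_one, Complex.conj_natCast]
  linear_combination ((k : ℂ) + 1) * h

lemma chain_subnormal {V : Type} [DecidableEq V] [Infinite V] (T : TreeData V) (c : V → V)
    (hc : ∀ u, T.chi u = {c u})
    (C : L2 V →L[ℂ] L2 V) (hC : ∀ (f : L2 V) (v : V), C f v = T.cesaro ⇑f v) :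
    IsSubnormal C := by
  have hcc : ∀ u, c u ∈ T.chi u := fun u => by rw [hc]; rfl
  let path : ℕ → V := fun n => c^[n] T.root
  have hps : ∀ n, path (n + 1) = c (path n) := fun n => Function.iterate_succ_apply' _ _ _
  have hdp : ∀ n, T.dep (path n) = n := by
    intro n
    induction n with
    | zero => exact T.dep_root
    | succ n ih => rw [hps, T.dep_chi (hcc _), ih]
  have hpd : ∀ n v, T.dep v = n → v = path n := by
    intro n
    induction n with
    | zero => intro v hv; exact T.eq_root hv
    | succ n ih =>
      intro v hv
      have hne : v ≠ T.root := by rintro rfl; rw [T.dep_root] at hv; omega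
      have h1 := T.dep_par hne
      have h2 : v ∈ T.chi (T.par v) := ⟨hne, rfl⟩
      rw [hc] at h2
      rw [hps, ← ih (T.par v) (by omega)]
      exact h2
  have hpinj : Function.Injective path := fun i j h => by
    rw [← hdp i, h, hdp]
  have hdinj : Function.Injective T.dep := fun v w h => by
    rw [hpd _ v rfl, h, ← hpd _ w rfl]
  have hces : ∀ (f : V → ℂ) d, T.cesaro f (path d) =
      ((d : ℂ) + 1)⁻¹ * ∑ i ∈ Finset.range (d + 1), f (path i) := by
    intro f d
    unfold TreeData.cesaro
    rw [hdp, ← Finset.sum_range_reflect (fun i => f (path i))]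
    congr 1
    refine Finset.sum_congr rfl fun j hj => ?_
    have hj := Finset.mem_range.1 hj
    congr 1
    apply hpd
    rw [T.dep_iter _ _ (by rw [hdp]; omega), hdp]
    omega
  let e : ℕ → L2 V := fun n => lp.single 2 (path n) (1 : ℂ)
  have hee : ∀ n i, e n (path i) = if i = n then 1 else 0 := by
    intro n i
    simp only [e, lp.single_apply, Pi.single_apply, hpinj.eq_iff]
  let x : ℕ → L2 V := fun n => ((n : ℂ) + 1) • (e n - e (n + 1))
  have hCx : ∀ n, C (x n) = e n := by
    intro n
    ext1; funext v
    rw [hpd _ v rfl, hC, hces]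
    generalize T.dep v = d
    simp only [x, lp.coeFn_smul, lp.coeFn_sub, Pi.smul_apply, Pi.sub_apply, hee, smul_eq_mul]
    rw [← Finset.mul_sum, Finset.sum_sub_distrib, Finset.sum_ite_eq', Finset.sum_ite_eq']
    simp only [Finset.mem_range]
    have hd1 : (d : ℂ) + 1 ≠ 0 := Nat.cast_add_one_ne_zero d
    rcases lt_trichotomy d n with h | h | h
    · rw [if_neg (by omega), if_neg (by omega), if_neg (by omega)]; simp
    · subst h
      simp [hd1]
    · rw [if_pos (by omega), if_pos (by omega), if_neg (by omega)]; simp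
  obtain ⟨G, hG, hGk⟩ := exists_onfamily
  have hG' : Orthonormal ℂ (fun v : V => G (T.dep v)) := hG.comp _ hdinj
  let J := hG'.orthogonalFamily.linearIsometry
  have hJe : ∀ n, J (e n) = G n := by
    intro n
    simp only [J, e]
    rw [OrthogonalFamily.linearIsometry_apply_single]
    simp [hdp]
  refine subnormal_of_isometries C J ?_
  intro k
  let B : L2 V →L[ℂ] MeasureTheory.Lp ℂ 2 (MeasureTheory.volume.restrict (Set.Ioi (0 : ℝ))) :=
    (lp.evalCLM ℂ (fun _ : ℕ => MeasureTheory.Lp ℂ 2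
      (MeasureTheory.volume.restrict (Set.Ioi (0 : ℝ)))) 2 k).comp J.toContinuousLinearMap
  let A := B.comp (((k : ℂ) + 1) • C - ContinuousLinearMap.id ℂ (L2 V))
  have hB : ∀ y, B y = J y k := fun y => rfl
  have hA : ∀ y, A y = J (((k : ℂ) + 1) • C y - y) k := fun y => rfl
  have hBe : ∀ n, B (e n) = G n k := by intro n; rw [hB, hJe]
  have hBx : ∀ n, B (x n) = ((n : ℂ) + 1) • (G n k - G (n + 1) k) := by
    intro n; simp only [x, map_smul, map_sub, hBe]
  have hAx : ∀ n, A (x n) = ((k : ℂ) + 1) • G n k - ((n : ℂ) + 1) • (G n k - G (n + 1) k) := by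
    intro n
    have : A (x n) = B (((k : ℂ) + 1) • C (x n) - x n) := rfl
    rw [this, hCx, map_sub, map_smul, hBe, hBx]
  have hgram : ∀ n l, inner ℂ (A (x n)) (A (x l)) = inner ℂ (B (x n)) (B (x l)) := by
    intro n l
    rw [hAx, hAx, hBx, hBx]
    have h := congrArg (fun r : ℝ => (r : ℂ)) (gram_rec k n l)
    push_cast at h
    rw [← hGk, ← hGk, ← hGk] at h
    exact abstract_gram (fun n => G n k) k n l h
  clear_value A
  clear_value B
  have hdense : (Submodule.span ℂ (Set.range x))ᗮ = ⊥ := by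
    rw [eq_bot_iff]
    intro f hf
    have h1 : ∀ n, f (path n) = f (path (n + 1)) := by
      intro n
      have h2 := (Submodule.mem_orthogonal _ _).1 hf (x n) (Submodule.subset_span ⟨n, rfl⟩)
      simp only [x, e, inner_smul_left, inner_sub_left] at h2
      rw [lp.inner_single_left, lp.inner_single_left] at h2
      have h3 : ((n : ℂ) + 1) ≠ 0 := Nat.cast_add_one_ne_zero n
      have h4 := (mul_eq_zero.1 h2).resolve_left (by simpa using h3)
      simpa [sub_eq_zero] using h4
    have h2 : ∀ n, f (path n) = f (path 0) := by
      intro n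
      induction n with
      | zero => rfl
      | succ n ih => rw [← h1, ih]
    have h3 : ∀ v, f v = f (path 0) := fun v => by rw [hpd _ v rfl, h2]
    have h4 : Summable fun v => ‖f v‖ ^ (2 : ℝ≥0∞).toReal := (lp.memℓp f).summable (by norm_num)
    have h5 : f (path 0) = 0 := by
      have h6 : (fun v => ‖f v‖ ^ (2 : ℝ≥0∞).toReal) = fun _ => ‖f (path 0)‖ ^ (2 : ℝ≥0∞).toReal := by
        funext v; rw [h3]
      rw [h6, summable_const_iff] at h4
      simpa using h4
    rw [Submodule.mem_bot]
    ext1; funext v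
    rw [h3, h5]; rfl
  have hop : (adjoint A).comp A = (adjoint B).comp B := by
    refine ContinuousLinearMap.ext_on (s := Set.range x) ?_ ?_
    · exact Submodule.dense_iff_topologicalClosure_eq_top.2
        (Submodule.topologicalClosure_eq_top_iff.2 hdense)
    · rintro _ ⟨l, rfl⟩
      rw [← sub_eq_zero, ← Submodule.mem_bot (R := ℂ), ← hdense]
      have : ∀ y ∈ Submodule.span ℂ (Set.range x), inner ℂ y (((adjoint A).comp A) (x l) - ((adjoint B).comp B) (x l)) = 0 := by
        intro y hy
        induction hy using Submodule.span_induction with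
        | mem y hy =>
          obtain ⟨n, rfl⟩ := hy
          rw [inner_sub_right, ContinuousLinearMap.comp_apply, ContinuousLinearMap.comp_apply,
            adjoint_inner_right, adjoint_inner_right, hgram, sub_self]
        | zero => simp
        | add y z _ _ hy hz => rw [inner_add_left, hy, hz, add_zero]
        | smul r y _ hy => rw [inner_smul_left, hy, mul_zero]
      exact (Submodule.mem_orthogonal _ _).2 this
  intro y
  rw [← hA, ← hB, ← sq_eq_sq₀ (norm_nonneg _) (norm_nonneg _), ← inner_self_eq_norm_sq (𝕜 := ℂ),
    ← inner_self_eq_norm_sq (𝕜 := ℂ), ← adjoint_inner_right, ← adjoint_inner_right]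
  congr 2
  exact congrArg (fun A : L2 V →L[ℂ] L2 V => A y) hop

end TreePart

/-- For a leafless, narrow rooted directed tree the bounded Cesàro operator
`C_T` is subnormal if and only if the tree has no branching vertex, i.e. every vertex has
exactly one child. -/
theorem cesaro_subnormal_iff_chain {V : Type} [Countable V] [Infinite V]
    (T : TreeData V)
    (hleafless : ∀ u : V, (T.chi u).Nonempty)
    (m : ℕ) (hm : ∀ n : ℕ, (T.level n).encard ≤ m)
    (C : L2 V →L[ℂ] L2 V) (hC : ∀ (f : L2 V) (v : V), C f v = T.cesaro ⇑f v) :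
    IsSubnormal C ↔ ∀ v : V, (T.chi v).encard = 1 := by
  classical
  choose c hc using hleafless
  constructor
  · intro hS x
    rw [Set.encard_eq_one]
    refine ⟨c x, Set.eq_singleton_iff_unique_mem.2 ⟨hc x, fun b hb => ?_⟩⟩
    by_contra hne
    obtain ⟨N, u, v, hu, hv, huv, hw⟩ := exists_stable T c hc m hm x b (c x) hb (hc x) hne
    exact no_branch T c N hc hw u v hu hv huv C hC hS
  · intro h
    refine chain_subnormal T c (fun u => ?_) C hC
    obtain ⟨a, ha⟩ := Set.encard_eq_one.1 (h u)
    have := hc u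
    rw [ha] at this ⊢
    rw [Set.mem_singleton_iff.1 this]
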